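/- Orthogonality of the hyperoctahedral Hall–Littlewood functions: if t and t_0, t_1, t_2, t_3 are real parameters in (−1,1)∖{0}, then for all λ, μ ∈ Λ with λ ≠ μ one has ∫_{[0,2π]^n} P_λ(ξ) · conj(P_μ(ξ)) · |Δ(ξ)|^2 dξ = 0. -/

import Mathlib

open Finset Complex MeasureTheory

noncomputable section

namespace QB

/-- The partition predicate: `lam` is weakly decreasing with nonnegative parts. -/
def IsPart (n : ℕ) (lam : Fin n → ℤ) : Prop :=
  (∀ i j : Fin n, i ≤ j → lam j ≤ lam i) ∧ ∀ i, 0 ≤ lam i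

instance (n : ℕ) (lam : Fin n → ℤ) : Decidable (IsPart n lam) := by
  unfold IsPart; infer_instance

/-- The cone `Λ` of partitions with at most `n` parts. -/
def Lam (n : ℕ) := {lam : Fin n → ℤ // IsPart n lam}

/-- `λ + e_{J+} - e_{J-}`. -/
def shift (n : ℕ) (lam : Fin n → ℤ) (Jp Jm : Finset (Fin n)) : Fin n → ℤ :=
  fun i => lam i + (if i ∈ Jp then 1 else 0) - (if i ∈ Jm then 1 else 0)

/-- `ε_j(J+, J-)`. -/
def eps (n : ℕ) (Jp Jm : Finset (Fin n)) (i : Fin n) : ℤ :=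
  if i ∈ Jp then 1 else if i ∈ Jm then -1 else 0

/-- the exponent `n - j` in paper indexing (`j = (i : ℕ) + 1`). -/
def en (n : ℕ) (i : Fin n) : ℤ := (n : ℤ) - (i : ℤ) - 1

/-- `t^{n-j}` in paper indexing. -/
def tn (n : ℕ) (t : ℂ) (i : Fin n) : ℂ := t ^ en n i

/-- the ratio `(1-t^{1+k-j})/(1-t^{k-j})` in paper indexing. -/
def rat (n : ℕ) (t : ℂ) (j k : Fin n) : ℂ :=
  (1 - t ^ ((k : ℤ) - (j : ℤ) + 1)) / (1 - t ^ ((k : ℤ) - (j : ℤ)))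

/-- `∏_{1 ≤ j < k ≤ n, λ_j = λ_k, ε_j > ε_k} (1-t^{1+k-j})/(1-t^{k-j})`. -/
def pairProd (n : ℕ) (t : ℂ) (lam : Fin n → ℤ) (Jp Jm : Finset (Fin n)) : ℂ :=
  ∏ j : Fin n, ∏ k : Fin n,
    if j < k ∧ lam j = lam k ∧ eps n Jp Jm j > eps n Jp Jm k then rat n t j k else 1

/-- the coefficient `W_{J+,J-}(λ)` (three-parameter case). -/
def W3 (n : ℕ) (t t0 t1 t2 : ℂ) (lam : Fin n → ℤ) (Jp Jm : Finset (Fin n)) : ℂ :=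
  (∏ j ∈ Jp, if lam j = 0 then
      (1 - t0 * t1 * tn n t j) * (1 - t0 * t2 * tn n t j) * (1 - t1 * t2 * tn n t j) else 1)
  * pairProd n t lam Jp Jm

/-- the coefficient `U_{K,m}(λ)` (three-parameter case). -/
def U3 (n : ℕ) (t t0 t1 t2 : ℂ) (K : Finset (Fin n)) (m : ℕ) (lam : Fin n → ℤ) : ℂ :=
  (-1 : ℂ) ^ m *
  ∑ p ∈ (univ : Finset (Finset (Fin n) × Finset (Fin n))).filter
      (fun p => p.1 ⊆ K ∧ p.2 ⊆ K ∧ Disjoint p.1 p.2 ∧ p.1.card + p.2.card = m),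
    (∏ j ∈ p.1, if lam j = 0 then (1 - t0 * t1 * tn n t j) * (1 - t0 * t2 * tn n t j) else 1) *
    (∏ j ∈ p.2, if lam j = 1 then 1 - t1 * t2 * tn n t j else 1) *
    (∏ j ∈ K, ∏ k ∈ K,
        if lam j = lam k ∧ eps n p.1 p.2 j > eps n p.1 p.2 k then rat n t j k else 1) *
    (∏ j ∈ p.2, ∏ k ∈ p.1, if lam j = lam k + 1 then rat n t j k else 1) *
    (∏ j ∈ K, t0 ^ (-(eps n p.1 p.2 j))) *
    (∏ j ∈ K, ∏ k ∈ K,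
        if j < k ∧ eps n p.1 p.2 j ≠ eps n p.1 p.2 k ∧ eps n p.1 p.2 k = 0
        then t ^ (-(eps n p.1 p.2 j)) else 1) *
    (∏ j ∈ K, ∏ k ∈ K,
        if j < k ∧ lam j = lam k ∧ eps n p.1 p.2 k - eps n p.1 p.2 j = 1 then t⁻¹ else 1)

/-- the difference operator `H_l` (three-parameter case). -/
def H3 (n : ℕ) (t t0 t1 t2 : ℂ) (l : ℕ) (f : Lam n → ℂ) : Lam n → ℂ := fun lam =>
  ∑ p ∈ (univ : Finset (Finset (Fin n) × Finset (Fin n))).filter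
      (fun p => Disjoint p.1 p.2 ∧ p.1.card + p.2.card ≤ l),
    if h : IsPart n (shift n lam.1 p.1 p.2) then
      U3 n t t0 t1 t2 (p.1ᶜ ∩ p.2ᶜ) (l - (p.1.card + p.2.card)) lam.1 *
      W3 n t t0 t1 t2 lam.1 p.1 p.2 * f ⟨_, h⟩
    else 0

/-- the Pieri coefficient `V_{J+,J-}(λ)` (three-parameter case). -/
def V3 (n : ℕ) (t t0 t1 t2 : ℂ) (lam : Fin n → ℤ) (Jp Jm : Finset (Fin n)) : ℂ :=
  (∏ j ∈ Jp, if lam j = 0 then (1 - t0 * t1 * tn n t j) * (1 - t0 * t2 * tn n t j) else 1) *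
  (∏ j ∈ Jm, if lam j = 1 then 1 - t1 * t2 * tn n t j else 1) *
  pairProd n t lam Jp Jm *
  ∏ j : Fin n, t0 ^ (-(eps n Jp Jm j)) * t ^ (-(en n j * eps n Jp Jm j))

/-- the gauge function `h(λ)` (three-parameter case). -/
def h3 (n : ℕ) (t t0 t1 t2 : ℂ) (lam : Fin n → ℤ) : ℂ :=
  ∏ j : Fin n, if 0 < lam j then
    t0 ^ (lam j) * t ^ (en n j * lam j) * (1 - t1 * t2 * tn n t j) else 1

/-- action of the hyperoctahedral group `W_n = S_n ⋉ {-1,1}^n` on `ξ ∈ ℂ^n`. -/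
def act (n : ℕ) (w : Equiv.Perm (Fin n) × (Fin n → Bool)) (xi : Fin n → ℂ) : Fin n → ℂ :=
  fun j => (if w.2 j then -1 else 1) * xi (w.1 j)

/-- the factor `C_λ(ξ)`. -/
def Cf (n : ℕ) (t t0 t1 t2 t3 : ℂ) (lam : Fin n → ℤ) (xi : Fin n → ℂ) : ℂ :=
  (∏ j : Fin n, ∏ k : Fin n, if j < k then
      ((1 - t * exp (I * (xi j - xi k))) * (1 - t * exp (I * (xi j + xi k)))) /
      ((1 - exp (I * (xi j - xi k))) * (1 - exp (I * (xi j + xi k)))) else 1) *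
  ∏ j : Fin n, if 0 < lam j then
      ((1 - t0 * exp (I * xi j)) * (1 - t1 * exp (I * xi j)) *
       (1 - t2 * exp (I * xi j)) * (1 - t3 * exp (I * xi j))) / (1 - exp (2 * I * xi j))
    else 1

/-- the normalization constant `c_λ`. -/
def ccf (n : ℕ) (t t0 t1 t2 t3 : ℂ) (lam : Fin n → ℤ) : ℂ :=
  ∏ j : Fin n,
    (t0 ^ (lam j) * t ^ (en n j * lam j) * (1 - t)) /
    ((1 - t ^ ((j : ℤ) + 1)) * (if lam j = 0 then 1 + tn n t j else 1) *
     (if lam j = 0 then 1 else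
        (1 - t0 * t1 * tn n t j) * (1 - t0 * t2 * tn n t j) * (1 - t0 * t3 * tn n t j)))

/-- the hyperoctahedral Hall–Littlewood function `P_λ(ξ)`. -/
def P (n : ℕ) (t t0 t1 t2 t3 : ℂ) (lam : Fin n → ℤ) (xi : Fin n → ℂ) : ℂ :=
  ccf n t t0 t1 t2 t3 lam *
  ∑ w : Equiv.Perm (Fin n) × (Fin n → Bool),
    Cf n t t0 t1 t2 t3 lam (act n w xi) *
    exp (-I * ∑ j : Fin n, (lam j : ℂ) * act n w xi j)

/-- the symmetric function `E_l(ξ)` (eigenvalue). -/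
def E (n : ℕ) (t t0 : ℂ) (l : ℕ) (xi : Fin n → ℂ) : ℂ :=
  ∑ S ∈ Finset.powersetCard l (univ : Finset (Fin n)),
    if h : S.card = l then
      ∏ k : Fin l,
        (2 * Complex.cos (xi ((S.orderIsoOfFin h k).1)) -
         t0 * t ^ ((((S.orderIsoOfFin h k).1 : ℕ) : ℤ) - (k : ℤ)) -
         t0⁻¹ * t ^ (-((((S.orderIsoOfFin h k).1 : ℕ) : ℤ) - (k : ℤ))))
    else 0

/-- `ξ` is generic: all factors `C_μ(wξ)` are defined (no vanishing denominators). -/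
def Generic (n : ℕ) (xi : Fin n → ℂ) : Prop :=
  ∀ w : Equiv.Perm (Fin n) × (Fin n → Bool),
    (∀ j k : Fin n, j < k →
      1 - exp (I * (act n w xi j - act n w xi k)) ≠ 0 ∧
      1 - exp (I * (act n w xi j + act n w xi k)) ≠ 0) ∧
    ∀ j : Fin n, 1 - exp (2 * I * act n w xi j) ≠ 0

/-- the weight function `Δ(ξ)`. -/
def Dlt (n : ℕ) (t t0 t1 t2 t3 : ℂ) (xi : Fin n → ℂ) : ℂ :=
  (∏ j : Fin n, ∏ k : Fin n, if j < k then
      ((1 - exp (I * (xi j - xi k))) * (1 - exp (I * (xi j + xi k)))) /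
      ((1 - t * exp (I * (xi j - xi k))) * (1 - t * exp (I * (xi j + xi k)))) else 1) *
  ∏ j : Fin n, (1 - exp (2 * I * xi j)) /
    ((1 - t0 * exp (I * xi j)) * (1 - t1 * exp (I * xi j)) *
     (1 - t2 * exp (I * xi j)) * (1 - t3 * exp (I * xi j)))

/-- `m_0(λ)`. -/
def m0c (n : ℕ) (lam : Fin n → ℤ) : ℕ := (univ.filter fun j => lam j = 0).card

/-- `m_1(λ)`. -/
def m1c (n : ℕ) (lam : Fin n → ℤ) : ℕ := (univ.filter fun j => lam j = 1).card

/-- `m_1^+(λ)` relative to `J_+`. -/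
def m1p (n : ℕ) (lam : Fin n → ℤ) (Jp : Finset (Fin n)) : ℕ :=
  (Jp.filter fun j => lam j = 1).card

/-- the Pieri coefficient `V_{J+,J-}(λ)` (four-parameter case). -/
def V4 (n : ℕ) (t t0 t1 t2 t3 : ℂ) (lam : Fin n → ℤ) (Jp Jm : Finset (Fin n)) : ℂ :=
  (∏ j ∈ Jp, if lam j = 0 then
      ((1 - t0*t1*t2*t3 * t ^ (en n j + (m0c n lam : ℤ) + (m1c n lam : ℤ) - (m1p n lam Jp : ℤ))) *
       ((1 - t0 * t1 * tn n t j) * (1 - t0 * t2 * tn n t j) * (1 - t0 * t3 * tn n t j))) /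
      ((1 - t0*t1*t2*t3 * t ^ (2 * en n j)) * (1 - t0*t1*t2*t3 * t ^ (2 * en n j + 1)))
    else 1) *
  (∏ j ∈ Jp, if lam j = 1 then 1 - t0*t1*t2*t3 * t ^ (en n j + (m0c n lam : ℤ)) else 1) *
  (∏ j ∈ Jm, if lam j = 1 then
      ((1 - t0*t1*t2*t3 * t ^ (en n j - 1)) *
       ((1 - t1 * t2 * tn n t j) * (1 - t1 * t3 * tn n t j) * (1 - t2 * t3 * tn n t j))) /
      ((1 - t0*t1*t2*t3 * t ^ (2 * en n j)) * (1 - t0*t1*t2*t3 * t ^ (2 * en n j - 1)))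
    else 1) *
  pairProd n t lam Jp Jm *
  ∏ j : Fin n, t0 ^ (-(eps n Jp Jm j)) * t ^ (-(en n j * eps n Jp Jm j))

/-- the coefficient `U_{K,m}(λ)` (four-parameter case). -/
def U4 (n : ℕ) (t t0 t1 t2 t3 : ℂ) (K : Finset (Fin n)) (m : ℕ) (lam : Fin n → ℤ) : ℂ :=
  (-1 : ℂ) ^ m *
  ∑ p ∈ (univ : Finset (Finset (Fin n) × Finset (Fin n))).filter
      (fun p => p.1 ⊆ K ∧ p.2 ⊆ K ∧ Disjoint p.1 p.2 ∧ p.1.card + p.2.card = m),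
    (∏ j ∈ p.1, if lam j = 0 then
        ((1 - t0 * t1 * tn n t j) * (1 - t0 * t2 * tn n t j) * (1 - t0 * t3 * tn n t j)) /
        (1 - t0*t1*t2*t3 * t ^ (2 * en n j)) else 1) *
    (∏ j ∈ p.1, if lam j = 1 then 1 - t0*t1*t2*t3 * t ^ (en n j) else 1) *
    (∏ j ∈ p.2, if lam j = 1 then
        ((1 - t1 * t2 * tn n t j) * (1 - t1 * t3 * tn n t j) * (1 - t2 * t3 * tn n t j)) /
        (1 - t0*t1*t2*t3 * t ^ (2 * en n j)) else 1) *
    (∏ j ∈ K, ∏ k ∈ K,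
        if j < k ∧ (eps n p.1 p.2 j + eps n p.1 p.2 k = -2 ∨ eps n p.1 p.2 j + eps n p.1 p.2 k = 1 ∨
              eps n p.1 p.2 j + eps n p.1 p.2 k = 2) ∧
           lam j = 1 ∧ lam k = (if eps n p.1 p.2 k = -1 then 1 else 0)
        then (1 - t0*t1*t2*t3 * t ^ (2 * (n : ℤ) + 1 - ((j : ℤ) + 1) - ((k : ℤ) + 1))) /
             (1 - t0*t1*t2*t3 * t ^ (2 * (n : ℤ) - ((j : ℤ) + 1) - ((k : ℤ) + 1))) else 1) *
    (∏ j ∈ p.1 ∪ p.2, ∏ k ∈ K \ p.2,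
        if j < k ∧ (eps n p.1 p.2 k - eps n p.1 p.2 j = 0 ∨ eps n p.1 p.2 k - eps n p.1 p.2 j = 1) ∧
           lam j = (if eps n p.1 p.2 j = -1 then 1 else 0) ∧ lam k = 0
        then (1 - t0*t1*t2*t3 * t ^ (2 * (n : ℤ) - 1 - ((j : ℤ) + 1) - ((k : ℤ) + 1))) /
             (1 - t0*t1*t2*t3 * t ^ (2 * (n : ℤ) - ((j : ℤ) + 1) - ((k : ℤ) + 1))) else 1) *
    (∏ j ∈ K, ∏ k ∈ K,
        if lam j = lam k ∧ eps n p.1 p.2 j > eps n p.1 p.2 k then rat n t j k else 1) *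
    (∏ j ∈ p.2, ∏ k ∈ p.1, if lam j = lam k + 1 then rat n t j k else 1) *
    (∏ j ∈ K, t0 ^ (-(eps n p.1 p.2 j))) *
    (∏ j ∈ K, ∏ k ∈ K,
        if j < k ∧ eps n p.1 p.2 j ≠ eps n p.1 p.2 k ∧ eps n p.1 p.2 k = 0
        then t ^ (-(eps n p.1 p.2 j)) else 1) *
    (∏ j ∈ K, ∏ k ∈ K,
        if j < k ∧ lam j = lam k ∧ eps n p.1 p.2 k - eps n p.1 p.2 j = 1 then t⁻¹ else 1)

/-- the coefficient `W_{J+,J-}(λ)` (four-parameter case). -/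
def W4 (n : ℕ) (t t0 t1 t2 t3 : ℂ) (lam : Fin n → ℤ) (Jp Jm : Finset (Fin n)) : ℂ :=
  (∏ j ∈ Jp, if lam j = 1 then 1 - t0*t1*t2*t3 * t ^ (en n j + (m0c n lam : ℤ)) else 1) *
  pairProd n t lam Jp Jm *
  ∏ j ∈ Jp, if lam j = 0 then
    ((1 - t0*t1*t2*t3 * t ^ (en n j - 1)) *
     (1 - t0*t1*t2*t3 * t ^ (en n j + (m0c n lam : ℤ) + (m1c n lam : ℤ) - (m1p n lam Jp : ℤ))) *
     ((1 - t0 * t1 * tn n t j) * (1 - t0 * t2 * tn n t j) * (1 - t0 * t3 * tn n t j) *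
      (1 - t1 * t2 * tn n t j) * (1 - t1 * t3 * tn n t j) * (1 - t2 * t3 * tn n t j))) /
    ((1 - t0*t1*t2*t3 * t ^ (2 * en n j - 1)) * (1 - t0*t1*t2*t3 * t ^ (2 * en n j)) ^ 2 *
     (1 - t0*t1*t2*t3 * t ^ (2 * en n j + 1)))
  else 1

/-- the difference operator `H_l` (four-parameter case). -/
def H4 (n : ℕ) (t t0 t1 t2 t3 : ℂ) (l : ℕ) (f : Lam n → ℂ) : Lam n → ℂ := fun lam =>
  ∑ p ∈ (univ : Finset (Finset (Fin n) × Finset (Fin n))).filter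
      (fun p => Disjoint p.1 p.2 ∧ p.1.card + p.2.card ≤ l),
    if h : IsPart n (shift n lam.1 p.1 p.2) then
      U4 n t t0 t1 t2 t3 (p.1ᶜ ∩ p.2ᶜ) (l - (p.1.card + p.2.card)) lam.1 *
      W4 n t t0 t1 t2 t3 lam.1 p.1 p.2 * f ⟨_, h⟩
    else 0

/-- the gauge function `h(λ)` (four-parameter case). -/
def h4 (n : ℕ) (t t0 t1 t2 t3 : ℂ) (lam : Fin n → ℤ) : ℂ :=
  ∏ j : Fin n,
    t0 ^ (lam j) * t ^ (en n j * lam j) *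
    (if lam j = 0 then 1 - t0*t1*t2*t3 * t ^ (en n j + (m0c n lam : ℤ) - 1) else 1) *
    (if lam j = 0 then 1 else
      (1 - t1 * t2 * tn n t j) * (1 - t1 * t3 * tn n t j) * (1 - t2 * t3 * tn n t j))

/-- the box `[0, 2π]^n`. -/
def box (n : ℕ) : Set (Fin n → ℝ) := Set.univ.pi fun _ => Set.Icc 0 (2 * Real.pi)


/-- the weighted measure `|Δ(ξ)|² dξ` on the box `[0,2π]^n`. -/
def wmeas (n : ℕ) (t t0 t1 t2 t3 : ℝ) : Measure (Fin n → ℝ) :=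
  ((volume : Measure (Fin n → ℝ)).restrict (box n)).withDensity
    fun xi => ENNReal.ofReal
      (‖Dlt n (t : ℂ) (t0 : ℂ) (t1 : ℂ) (t2 : ℂ) (t3 : ℂ)
        (fun j => (xi j : ℂ))‖ ^ 2)

/-- the normalization integral `∫_{[0,2π]^n} |P_λ(ξ) Δ(ξ)|² dξ`. -/
def nInt (n : ℕ) (t t0 t1 t2 t3 : ℝ) (lam : Fin n → ℤ) : ℝ :=
  ∫ xi in box n,
    ‖P n (t : ℂ) (t0 : ℂ) (t1 : ℂ) (t2 : ℂ) (t3 : ℂ) lam (fun j => (xi j : ℂ)) *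
      Dlt n (t : ℂ) (t0 : ℂ) (t1 : ℂ) (t2 : ℂ) (t3 : ℂ) (fun j => (xi j : ℂ))‖ ^ 2




def pp (a b c d x : ℂ) : ℂ := (1 - a * x) * (1 - b * x) * (1 - c * x) * (1 - d * x)

def CP (t x y : ℂ) : ℂ :=
  ((1 - t * (x / y)) * (1 - t * (x * y))) / ((1 - x / y) * (1 - x * y))

def DP (t x y : ℂ) : ℂ :=
  ((1 - x / y) * (1 - x * y)) / ((1 - t * (x / y)) * (1 - t * (x * y)))

def prodLt {n : ℕ} (f : Fin n → Fin n → ℂ) : ℂ :=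
  ∏ j : Fin n, ∏ k : Fin n, if j < k then f j k else 1

lemma prodLt_mul {n : ℕ} (f g : Fin n → Fin n → ℂ) :
    prodLt f * prodLt g = prodLt (fun j k => f j k * g j k) := by
  unfold prodLt
  rw [← Finset.prod_mul_distrib]
  refine Finset.prod_congr rfl fun j _ => ?_
  rw [← Finset.prod_mul_distrib]
  refine Finset.prod_congr rfl fun k _ => ?_
  split_ifs <;> simp

lemma prodLt_congr {n : ℕ} {f g : Fin n → Fin n → ℂ} (h : ∀ j k, j < k → f j k = g j k) :
    prodLt f = prodLt g := by
  unfold prodLt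
  refine Finset.prod_congr rfl fun j _ => Finset.prod_congr rfl fun k _ => ?_
  split_ifs with hh
  · exact h j k hh
  · rfl

lemma prod_all {n : ℕ} (A : Fin n → Fin n → ℂ) (hA : ∀ j, A j j = 1) :
    ∏ j : Fin n, ∏ k : Fin n, A j k = prodLt (fun j k => A j k * A k j) := by
  rw [← prodLt_mul]
  have h2 : prodLt (fun j k => A k j) =
      ∏ j : Fin n, ∏ k : Fin n, if k < j then A j k else 1 := by
    unfold prodLt
    rw [Finset.prod_comm]
  rw [h2]
  unfold prodLt
  rw [← Finset.prod_mul_distrib]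
  refine Finset.prod_congr rfl fun j _ => ?_
  rw [← Finset.prod_mul_distrib]
  refine Finset.prod_congr rfl fun k _ => ?_
  rcases lt_trichotomy j k with h | h | h
  · simp [h, h.not_gt]
  · subst h; simp [hA]
  · simp [h, h.not_gt]

lemma prodLt_perm {n : ℕ} (s : Equiv.Perm (Fin n)) (f : Fin n → Fin n → ℂ) :
    prodLt (fun j k => f (s j) (s k)) =
      prodLt (fun j k => if s.symm j < s.symm k then f j k else f k j) := by
  have h1 : prodLt (fun j k => f (s j) (s k)) =
      ∏ j : Fin n, ∏ k : Fin n, if s.symm j < s.symm k then f j k else 1 := by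
    unfold prodLt
    symm
    rw [← Equiv.prod_comp s]
    refine Finset.prod_congr rfl fun j _ => ?_
    rw [← Equiv.prod_comp s]
    simp
  rw [h1, prod_all _ (by simp)]
  refine prodLt_congr fun j k hjk => ?_
  rcases lt_trichotomy (s.symm j) (s.symm k) with h | h | h
  · simp [h, h.not_gt]
  · exact absurd (s.symm.injective h) hjk.ne
  · simp [h, h.not_gt]

def actZ {n : ℕ} (w : Equiv.Perm (Fin n) × (Fin n → Bool)) (z : Fin n → ℂ) : Fin n → ℂ :=
  fun j => if w.2 j then (z (w.1 j))⁻¹ else z (w.1 j)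

def CZ {n : ℕ} (t a b c d : ℂ) (lam : Fin n → ℤ) (z : Fin n → ℂ) : ℂ :=
  prodLt (fun j k => CP t (z j) (z k)) *
    ∏ j : Fin n, if 0 < lam j then pp a b c d (z j) / (1 - z j ^ 2) else 1

def DZ {n : ℕ} (t a b c d : ℂ) (z : Fin n → ℂ) : ℂ :=
  prodLt (fun j k => DP t (z j) (z k)) * ∏ j : Fin n, (1 - z j ^ 2) / pp a b c d (z j)

def Mon {n : ℕ} (lam : Fin n → ℤ) (z : Fin n → ℂ) : ℂ := ∏ j : Fin n, z j ^ (-(lam j))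

def GP (t x y : ℂ) : ℂ := DP t x y * DP t x⁻¹ y⁻¹

lemma GP_eq (t x y : ℂ) : GP t x y = ((1 - x * y⁻¹) * (1 - x * y) * (1 - x⁻¹ * y) * (1 - x⁻¹ * y⁻¹))
   / ((1 - t * (x * y⁻¹)) * (1 - t * (x * y)) * (1 - t * (x⁻¹ * y)) * (1 - t * (x⁻¹ * y⁻¹))) := by
  unfold GP DP
  rw [div_mul_div_comm, div_eq_mul_inv x y, div_eq_mul_inv x⁻¹ y⁻¹, inv_inv]
  congr 1 <;> ring

lemma GP_symm (t x y : ℂ) : GP t x y = GP t y x := by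
  rw [GP_eq, GP_eq]; congr 1 <;> ring

lemma GP_inv_left (t x y : ℂ) : GP t x⁻¹ y = GP t x y := by
  rw [GP_eq, GP_eq, inv_inv]; congr 1 <;> ring

lemma GP_inv_right (t x y : ℂ) : GP t x y⁻¹ = GP t x y := by
  rw [GP_symm, GP_inv_left, GP_symm]

def GS (a b c d x : ℂ) : ℂ := (1 - x ^ 2) / pp a b c d x * ((1 - x⁻¹ ^ 2) / pp a b c d x⁻¹)

lemma DZ_mul {n : ℕ} (t a b c d : ℂ) (z : Fin n → ℂ) :
    DZ t a b c d z * DZ t a b c d z⁻¹ =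
      prodLt (fun j k => GP t (z j) (z k)) * ∏ j, GS a b c d (z j) := by
  unfold DZ
  rw [mul_mul_mul_comm, prodLt_mul, ← Finset.prod_mul_distrib]
  rfl

lemma DZ_inv {n : ℕ} (t a b c d : ℂ) (w : Equiv.Perm (Fin n) × (Fin n → Bool)) (z : Fin n → ℂ) :
    DZ t a b c d (actZ w z) * DZ t a b c d (actZ w z)⁻¹ = DZ t a b c d z * DZ t a b c d z⁻¹ := by
  rw [DZ_mul, DZ_mul]
  congr 1
  · have : prodLt (fun j k => GP t (actZ w z j) (actZ w z k)) =
      prodLt (fun j k => (fun j k => GP t (z j) (z k)) (w.1 j) (w.1 k)) := by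
      refine prodLt_congr fun j k _ => ?_
      unfold actZ
      split_ifs <;> simp [GP_inv_left, GP_inv_right]
    rw [this, prodLt_perm w.1 (fun j k => GP t (z j) (z k))]
    refine prodLt_congr fun j k _ => ?_
    split_ifs
    · rfl
    · exact GP_symm _ _ _
  · rw [← Equiv.prod_comp w.1 (fun j => GS a b c d (z j))]
    refine Finset.prod_congr rfl fun j _ => ?_
    unfold actZ
    split_ifs
    · unfold GS; rw [inv_inv, mul_comm]
    · rfl

/-- Blaschke-type factor or one -/
def HB (t : ℂ) (e : Bool) (Y : ℂ) : ℂ := if e then (t - Y) / (1 - t * Y) else 1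

def cf (t x : ℂ) : ℂ := (1 - t * x) / (1 - x)
def df (t x : ℂ) : ℂ := (1 - x) / (1 - t * x)

lemma cf_df (t x : ℂ) (h1 : 1 - x ≠ 0) (h2 : 1 - t * x ≠ 0) : cf t x * df t x = HB t false x := by
  unfold cf df HB; field_simp; simp

lemma cf_inv_df (t x : ℂ) (h0 : x ≠ 0) (h1 : 1 - x ≠ 0) (h2 : 1 - t * x ≠ 0) :
    cf t x⁻¹ * df t x = HB t true x := by
  have h3 : x - 1 ≠ 0 := by intro h; apply h1; linear_combination -h
  have e : cf t x⁻¹ = (t - x) / (1 - x) := by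
    unfold cf
    rw [div_eq_div_iff _ h1]
    · field_simp; ring
    · intro h; apply h3; field_simp at h; linear_combination h
  rw [e]
  unfold df HB; rw [if_pos rfl]; field_simp

lemma pair_ex (t : ℂ) (s1 s2 o : Bool) : ∃ e1 e2 : Bool, ∀ x y : ℂ, x ≠ 0 → y ≠ 0 → x ≠ y →
    x * y ≠ 1 → 1 - t * (x / y) ≠ 0 → 1 - t * (x * y) ≠ 0 →
    (if o then CP t (if s1 then x else x⁻¹) (if s2 then y else y⁻¹)
     else CP t (if s2 then y else y⁻¹) (if s1 then x else x⁻¹)) * DP t x y =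
     HB t e1 (x / y) * HB t e2 (x * y) := by
  have key : ∀ u v : ℂ, CP t u v = cf t (u / v) * cf t (u * v) := by
    intro u v; unfold CP cf; rw [div_mul_div_comm]
  have key2 : ∀ u v : ℂ, DP t u v = df t (u / v) * df t (u * v) := by
    intro u v; unfold DP df; rw [div_mul_div_comm]
  have B : ∀ x y : ℂ, x ≠ y → y ≠ 0 → 1 - x / y ≠ 0 := by
    intro x y h hy h'
    apply h; field_simp at h'; linear_combination -h'
  have r1 : ∀ x y : ℂ, y / x = (x / y)⁻¹ := fun x y => (inv_div x y).symm
  refine ⟨if s1 then (if s2 then !o else false) else (if s2 then true else o),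
    if s1 then (if s2 then false else !o) else (if s2 then o else true), ?_⟩
  intro x y hx hy hxy h1 h2 h3
  have b1 := B x y hxy hy
  have b2 : 1 - x * y ≠ 0 := fun h => h1 (by linear_combination -h)
  have b0 : x / y ≠ 0 := div_ne_zero hx hy
  have b0' : x * y ≠ 0 := mul_ne_zero hx hy
  have A1 := cf_df t _ b1 h2
  have A2 := cf_df t _ b2 h3
  have A3 := cf_inv_df t _ b0 b1 h2
  have A4 := cf_inv_df t _ b0' b2 h3
  rw [key2]
  have q1 : x⁻¹ / y⁻¹ = (x / y)⁻¹ := by field_simp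
  have q2 : y⁻¹ / x⁻¹ = x / y := by field_simp
  have q3 : x⁻¹ / y = (x * y)⁻¹ := by field_simp
  have q4 : y⁻¹ / x = (x * y)⁻¹ := by field_simp
  have q5 : x / y⁻¹ = x * y := by field_simp
  have q6 : y / x⁻¹ = x * y := by field_simp
  have q7 : x⁻¹ * y⁻¹ = (x * y)⁻¹ := by field_simp
  have q8 : y⁻¹ * x⁻¹ = (x * y)⁻¹ := by field_simp
  have q9 : x * y⁻¹ = x / y := by field_simp
  have q10 : y⁻¹ * x = x / y := by field_simp
  have q11 : y * x⁻¹ = (x / y)⁻¹ := by field_simp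
  have q12 : x⁻¹ * y = (x / y)⁻¹ := by field_simp
  have q13 : y * x = x * y := mul_comm _ _
  cases s1 <;> cases s2 <;> cases o <;>
    simp only [key, if_true, if_false, q1, q2, q3, q4, q5, q6, q7, q8, q9, q10, q11, q12, q13, r1 x y,
      Bool.not_true, Bool.not_false, Bool.false_eq_true] <;>
    first
    | rw [← A1, ← A2]; ring
    | rw [← A1, ← A4]; ring
    | rw [← A3, ← A2]; ring
    | rw [← A3, ← A4]; ring



lemma one_sub_ne {t x : ℂ} (ht : ‖t‖ < 1) (hx : ‖x‖ ≤ 1) : 1 - t * x ≠ 0 := by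
  intro h
  have h1 : t * x = 1 := by linear_combination -h
  have h2 : ‖t‖ * ‖x‖ = 1 := by rw [← norm_mul, h1, norm_one]
  nlinarith [norm_nonneg t, norm_nonneg x]

lemma pp_ne {a b c d x : ℂ} (ha : ‖a‖ < 1) (hb : ‖b‖ < 1) (hc : ‖c‖ < 1) (hd : ‖d‖ < 1)
    (hx : ‖x‖ ≤ 1) : pp a b c d x ≠ 0 :=
  mul_ne_zero (mul_ne_zero (mul_ne_zero (one_sub_ne ha hx) (one_sub_ne hb hx))
    (one_sub_ne hc hx)) (one_sub_ne hd hx)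

lemma pp_diff (a b c d : ℂ) : Differentiable ℂ (pp a b c d) := by
  unfold pp; fun_prop

def qq (a b c d x : ℂ) : ℂ := (x - a) * (x - b) * (x - c) * (x - d)

lemma qq_eq (a b c d x : ℂ) (hx : x ≠ 0) : pp a b c d x⁻¹ * x ^ 4 = qq a b c d x := by
  unfold pp qq; field_simp

def singleF (a b c d : ℂ) (lam m : ℤ) (s : Bool) (y : ℂ) : ℂ :=
  ((if 0 < lam then pp a b c d y⁻¹ / (1 - y⁻¹ ^ 2) else 1) * y⁻¹ ^ (-lam) *
    ((1 - y⁻¹ ^ 2) / pp a b c d y⁻¹) * ((1 - y ^ 2) / pp a b c d y)) *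
    ((if 0 < m then pp a b c d (if s then y else y⁻¹) / (1 - (if s then y else y⁻¹) ^ 2) else 1) *
    (if s then y else y⁻¹) ^ (-m))

lemma single_ex (a b c d : ℂ) (ha : ‖a‖ < 1) (hb : ‖b‖ < 1) (hc : ‖c‖ < 1) (hd : ‖d‖ < 1)
    (lam m : ℤ) (hl : 0 ≤ lam) (hm : 0 ≤ m) (s : Bool) :
    ∃ N : ℂ → ℂ, ContinuousOn N (Metric.sphere 0 1) ∧
      (0 < lam → DifferentiableOn ℂ N (Metric.closedBall 0 1)) ∧
      ∀ y : ℂ, ‖y‖ = 1 → y ^ 2 ≠ 1 → singleF a b c d lam m s y = y ^ (lam - m) * N y := by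
  -- the factor in the second slot
  have step : ∃ N : ℂ → ℂ, DifferentiableOn ℂ N (Metric.closedBall 0 1) ∧
      ∀ y : ℂ, ‖y‖ = 1 → y ^ 2 ≠ 1 → ((1 - y ^ 2) / pp a b c d y) *
    ((if 0 < m then pp a b c d (if s then y else y⁻¹) / (1 - (if s then y else y⁻¹) ^ 2) else 1) *
    (if s then y else y⁻¹) ^ (-m)) = y ^ (-m) * N y := by
    have hpp : ∀ y ∈ Metric.closedBall (0 : ℂ) 1, pp a b c d y ≠ 0 := fun y hy =>
      pp_ne ha hb hc hd (by simpa using hy)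
    rcases hm.lt_or_eq with hm' | hm'
    · cases s
      · obtain ⟨k, hk⟩ : ∃ k : ℕ, m = k + 1 := ⟨(m - 1).toNat, by omega⟩
        refine ⟨fun y => - y ^ (2 * k) * qq a b c d y / pp a b c d y, ?_, ?_⟩
        · refine DifferentiableOn.div ?_ (pp_diff a b c d).differentiableOn hpp
          unfold qq; fun_prop
        · intro y hy hy2
          have hy0 : y ≠ 0 := by rintro rfl; simp at hy
          have h1 : pp a b c d y ≠ 0 := pp_ne ha hb hc hd hy.le
          have h2 : 1 - y ^ 2 ≠ 0 := fun h => hy2 (by linear_combination -h)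
          have h3 : (1 - y⁻¹ ^ 2) = -(1 - y ^ 2) / y ^ 2 := by field_simp; ring
          rw [if_pos hm']
          simp only [Bool.false_eq_true, if_false]
          rw [← qq_eq _ _ _ _ _ hy0, h3, hk, inv_zpow, zpow_neg, inv_inv]
          have : y ^ ((k : ℤ) + 1) = y ^ (k + 1) := by norm_cast
          rw [this]
          field_simp
          ring
      · refine ⟨fun _ => 1, by fun_prop, ?_⟩
        intro y hy hy2
        have h1 : pp a b c d y ≠ 0 := pp_ne ha hb hc hd hy.le
        have h2 : 1 - y ^ 2 ≠ 0 := fun h => hy2 (by linear_combination -h)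
        simp only [hm', if_true]
        field_simp
    · refine ⟨fun y => (1 - y ^ 2) / pp a b c d y, ?_, ?_⟩
      · exact DifferentiableOn.div (by fun_prop) (pp_diff a b c d).differentiableOn hpp
      · intro y hy hy2
        simp [← hm']
  obtain ⟨N, hN, hNe⟩ := step
  have hsub : Metric.sphere (0 : ℂ) 1 ⊆ Metric.closedBall 0 1 := Metric.sphere_subset_closedBall
  have hN' : ContinuousOn N (Metric.sphere 0 1) := hN.continuousOn.mono hsub
  rcases hl.lt_or_eq with hl' | hl'
  · refine ⟨N, hN', fun _ => hN, ?_⟩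
    intro y hy hy2
    have hy0 : y ≠ 0 := by rintro rfl; simp at hy
    have hi : ‖y⁻¹‖ ≤ 1 := by rw [norm_inv, hy, inv_one]
    have h1 : pp a b c d y⁻¹ ≠ 0 := pp_ne ha hb hc hd hi
    have h2 : 1 - y⁻¹ ^ 2 ≠ 0 := fun h => hy2 (by
      have : y⁻¹ ^ 2 = 1 := by linear_combination -h
      rwa [inv_pow, inv_eq_one] at this)
    have := hNe y hy hy2
    unfold singleF
    rw [mul_assoc, this, if_pos hl', inv_zpow, zpow_neg, inv_inv, zpow_sub₀ hy0, zpow_neg]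
    generalize pp a b c d y⁻¹ = p1 at h1 ⊢
    generalize 1 - y⁻¹ ^ 2 = p2 at h2 ⊢
    field_simp
  · refine ⟨fun y => (1 - y⁻¹ ^ 2) / pp a b c d y⁻¹ * N y, ?_, fun h => by omega, ?_⟩
    · refine ContinuousOn.mul (ContinuousOn.div ?_ ?_ ?_) hN'
      · refine continuousOn_const.sub (ContinuousOn.pow (continuousOn_inv₀.mono ?_) 2)
        intro y hy h; simp at h; subst h; simp at hy
      · refine (pp_diff a b c d).continuous.comp_continuousOn (continuousOn_inv₀.mono ?_)
        intro y hy h; simp at h; subst h; simp at hy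
      · intro y hy
        apply pp_ne ha hb hc hd
        have hy : ‖y‖ = 1 := by simpa using hy
        rw [norm_inv, hy, inv_one]
    · intro y hy hy2
      have := hNe y hy hy2
      unfold singleF
      rw [mul_assoc, this, ← hl']
      simp
      ring

def Good (e : ℤ) (G : ℂ → ℂ) : Prop :=
  ∃ H : ℂ → ℂ, DifferentiableOn ℂ H (Metric.closedBall 0 1) ∧ ∀ u, ‖u‖ = 1 → G u = u ^ e * H u

lemma Good.congr {e : ℤ} {F G : ℂ → ℂ} (h : Good e F) (hh : ∀ u, ‖u‖ = 1 → G u = F u) :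
    Good e G := by
  obtain ⟨H, h1, h2⟩ := h
  exact ⟨H, h1, fun u hu => by rw [hh u hu, h2 u hu]⟩

lemma Good.mul {e f : ℤ} {F G : ℂ → ℂ} (hF : Good e F) (hG : Good f G) :
    Good (e + f) (fun u => F u * G u) := by
  obtain ⟨H, h1, h2⟩ := hF
  obtain ⟨H', h1', h2'⟩ := hG
  refine ⟨fun u => H u * H' u, h1.mul h1', fun u hu => ?_⟩
  have hu0 : u ≠ 0 := by rintro rfl; simp at hu
  simp only [h2 u hu, h2' u hu, zpow_add₀ hu0]
  ring

lemma good_const (c : ℂ) : Good 0 (fun _ => c) :=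
  ⟨fun _ => c, by fun_prop, fun u _ => by simp⟩

lemma Good.prod {ι : Type*} (s : Finset ι) (e : ι → ℤ) (F : ι → ℂ → ℂ)
    (h : ∀ i ∈ s, Good (e i) (F i)) : Good (∑ i ∈ s, e i) (fun u => ∏ i ∈ s, F i u) := by
  classical
  induction s using Finset.induction_on with
  | empty => simpa using good_const 1
  | insert i s hi ih =>
    rw [Finset.sum_insert hi]
    refine ((h i (by simp)).mul (ih fun j hj => h j (by simp [hj]))).congr fun u _ => ?_
    rw [Finset.prod_insert hi]

lemma good_HB {t : ℂ} (ht : ‖t‖ < 1) (e : Bool) {r : ℂ} (hr : ‖r‖ ≤ 1) (k : ℕ) :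
    Good 0 (fun u => HB t e (r * u ^ k)) := by
  refine ⟨fun u => HB t e (r * u ^ k), ?_, by simp⟩
  cases e
  · simp [HB]
  · simp only [HB, if_true]
    refine DifferentiableOn.div (by fun_prop) (by fun_prop) fun u hu => ?_
    apply one_sub_ne ht
    have hu : ‖u‖ ≤ 1 := by simpa using hu
    rw [norm_mul, norm_pow]
    have := pow_le_one₀ (norm_nonneg u) hu (n := k)
    nlinarith [norm_nonneg r, norm_nonneg u]

lemma Good.prodLt {n : ℕ} (F : Fin n → Fin n → ℂ → ℂ) (h : ∀ i l, i < l → Good 0 (F i l)) :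
    Good 0 (fun u => prodLt (fun i l => F i l u)) := by
  have := Good.prod (univ : Finset (Fin n)) (fun _ => 0)
    (fun i u => ∏ l, if i < l then F i l u else 1) (by
      intro i _
      have := Good.prod (univ : Finset (Fin n)) (fun _ => 0)
        (fun l u => if i < l then F i l u else 1) (by
          intro l _
          by_cases hil : i < l
          · simpa [hil] using h i l hil
          · simpa [hil] using good_const 1)
      simpa using this)
  simpa [QB.prodLt] using this

def KK {n : ℕ} (t : ℂ) (e1 e2 : Fin n → Fin n → Bool) (q : Fin n → ℤ) (N : Fin n → ℂ → ℂ)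
    (y : Fin n → ℂ) : ℂ :=
  prodLt (fun i l => HB t (e1 i l) (y i / y l) * HB t (e2 i l) (y i * y l)) *
    ∏ j, (y j ^ (q j) * N j (y j))

lemma KK_good {n : ℕ} {t : ℂ} (ht : ‖t‖ < 1) (e1 e2 : Fin n → Fin n → Bool) (q : Fin n → ℤ)
    (N : Fin n → ℂ → ℂ) (i0 : Fin n)
    (hN : ∀ j ≤ i0, DifferentiableOn ℂ (N j) (Metric.closedBall 0 1))
    (y : Fin n → ℂ) (hy : ∀ j, ‖y j‖ = 1) :
    Good (∑ j, if j ≤ i0 then q j else 0)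
      (fun u => KK t e1 e2 q N (fun j => y j * if j ≤ i0 then u else 1)) := by
  unfold KK
  rw [← zero_add (∑ j, _)]
  refine Good.mul ?_ ?_
  · refine Good.prodLt (fun i l u => HB t (e1 i l) ((y i * if i ≤ i0 then u else 1) /
      (y l * if l ≤ i0 then u else 1)) * HB t (e2 i l) ((y i * if i ≤ i0 then u else 1) *
      (y l * if l ≤ i0 then u else 1))) ?_
    intro i l hil
    have hr1 : ‖y i / y l‖ ≤ 1 := by rw [norm_div, hy, hy]; simp
    have hr2 : ‖y i * y l‖ ≤ 1 := by rw [norm_mul, hy, hy]; simp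
    have hl0 : y l ≠ 0 := fun h => by simpa [h] using hy l
    by_cases hi : i ≤ i0 <;> by_cases hl : l ≤ i0
    · refine ((good_HB ht (e1 i l) hr1 0).mul (good_HB ht (e2 i l) hr2 2)).congr fun u hu => ?_
      have hu0 : u ≠ 0 := by rintro rfl; simp at hu
      simp only [hi, hl, if_true]
      congr 2 <;> field_simp
    · refine ((good_HB ht (e1 i l) hr1 1).mul (good_HB ht (e2 i l) hr2 1)).congr fun u hu => ?_
      simp only [hi, hl, if_true, if_false]
      congr 2 <;> field_simp
    · exact absurd (hil.le.trans hl) hi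
    · refine ((good_HB ht (e1 i l) hr1 0).mul (good_HB ht (e2 i l) hr2 0)).congr fun u hu => ?_
      simp only [hi, hl, if_false]
      congr 2 <;> field_simp
  · refine Good.prod univ _ _ fun j _ => ?_
    by_cases hj : j ≤ i0
    · simp only [hj, if_true]
      refine ⟨fun u => y j ^ (q j) * N j (y j * u), ?_, fun u hu => ?_⟩
      · refine DifferentiableOn.const_mul ((hN j hj).comp (by fun_prop) ?_) _
        intro u hu
        simpa [hy] using hu
      · simp only [mul_zpow]; ring
    · simp only [hj, if_false]
      exact good_const _

lemma KK_cont {n : ℕ} {X : Type*} [TopologicalSpace X] {t : ℂ} (ht : ‖t‖ < 1)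
    (e1 e2 : Fin n → Fin n → Bool) (q : Fin n → ℤ)
    (N : Fin n → ℂ → ℂ) (hN : ∀ j, ContinuousOn (N j) (Metric.sphere 0 1))
    (y : X → Fin n → ℂ) (hc : ∀ j, Continuous fun x => y x j) (hy : ∀ x j, ‖y x j‖ = 1) :
    Continuous (fun x => KK t e1 e2 q N (y x)) := by
  have h0 : ∀ x j, y x j ≠ 0 := fun x j h => by simpa [h] using hy x j
  have hHB : ∀ (e : Bool) (f : X → ℂ), Continuous f → (∀ x, ‖f x‖ ≤ 1) →
      Continuous fun x => HB t e (f x) := by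
    intro e f hf h1
    cases e
    · simpa [HB] using continuous_const
    · simp only [HB, if_true]
      exact Continuous.div (by fun_prop) (by fun_prop) fun x => one_sub_ne ht (h1 x)
  unfold KK prodLt
  refine Continuous.mul ?_ ?_
  · refine continuous_finsetProd _ fun i _ => continuous_finsetProd _ fun l _ => ?_
    split_ifs
    · refine (hHB _ _ ((hc i).div (hc l) fun x => h0 x l) fun x => ?_).mul
        (hHB _ _ ((hc i).mul (hc l)) fun x => ?_)
      · simp [hy]
      · simp [hy]
    · exact continuous_const
  · refine continuous_finsetProd _ fun j _ => ?_
    refine Continuous.mul ((hc j).zpow₀ _ fun x => Or.inl (h0 x j)) ?_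
    exact (hN j).comp_continuous (hc j) fun x => by simpa using hy x j



def GenZ {n : ℕ} (z : Fin n → ℂ) : Prop :=
  (∀ j, z j ^ 2 ≠ 1) ∧ ∀ j k, j ≠ k → z j ≠ z k ∧ z j * z k ≠ 1

lemma term_ex {n : ℕ} (t a b c d : ℂ) (ht : ‖t‖ < 1)
    (ha : ‖a‖ < 1) (hb : ‖b‖ < 1) (hc : ‖c‖ < 1) (hd : ‖d‖ < 1)
    (lam mu : Fin n → ℤ) (hl : ∀ j, 0 ≤ lam j) (hm : ∀ j, 0 ≤ mu j)
    (s : Equiv.Perm (Fin n)) (sg : Fin n → Bool) :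
    ∃ (e1 e2 : Fin n → Fin n → Bool) (N : Fin n → ℂ → ℂ),
      (∀ j, ContinuousOn (N j) (Metric.sphere 0 1)) ∧
      (∀ j, 0 < lam j → DifferentiableOn ℂ (N j) (Metric.closedBall 0 1)) ∧
      ∀ y : Fin n → ℂ, (∀ j, ‖y j‖ = 1) → GenZ y → ∀ bb : Fin n → ℂ,
        (∀ j, bb j = if sg (s j) then y (s j) else (y (s j))⁻¹) →
        CZ t a b c d lam y⁻¹ * Mon lam y⁻¹ * (CZ t a b c d mu bb * Mon mu bb) *
          (DZ t a b c d y⁻¹ * DZ t a b c d y) =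
        KK t e1 e2 (fun j => lam j - mu (s.symm j)) N y := by
  choose e1 e2 he using fun i l : Fin n => pair_ex t (sg i) (sg l) (decide (s.symm i < s.symm l))
  choose N hN1 hN2 hN3 using fun j : Fin n => single_ex a b c d ha hb hc hd (lam j)
    (mu (s.symm j)) (hl j) (hm _) (sg j)
  refine ⟨e1, e2, N, hN1, hN2, ?_⟩
  intro y hy hg bb hbb
  have hy0 : ∀ j, y j ≠ 0 := fun j h => by simpa [h] using hy j
  have hP : prodLt (fun j k => CP t (y⁻¹ j) (y⁻¹ k)) * prodLt (fun j k => CP t (bb j) (bb k)) *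
      (prodLt (fun j k => DP t (y⁻¹ j) (y⁻¹ k)) * prodLt (fun j k => DP t (y j) (y k))) =
      prodLt (fun i l => HB t (e1 i l) (y i / y l) * HB t (e2 i l) (y i * y l)) := by
    have hre : prodLt (fun j k => CP t (bb j) (bb k)) =
        prodLt (fun j k => if s.symm j < s.symm k then
          CP t (if sg j then y j else (y j)⁻¹) (if sg k then y k else (y k)⁻¹) else
          CP t (if sg k then y k else (y k)⁻¹) (if sg j then y j else (y j)⁻¹)) := by
      rw [← prodLt_perm s (fun j k => CP t (if sg j then y j else (y j)⁻¹)
        (if sg k then y k else (y k)⁻¹))]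
      exact prodLt_congr fun j k _ => by rw [hbb j, hbb k]
    rw [hre, prodLt_mul, prodLt_mul, prodLt_mul]
    refine prodLt_congr fun j k hjk => ?_
    obtain ⟨g1, g2⟩ := hg.2 j k hjk.ne
    have n1 : ‖y j / y k‖ ≤ 1 := by simp [hy]
    have n2 : ‖y j * y k‖ ≤ 1 := by simp [hy]
    have n3 : ‖(y j)⁻¹ / (y k)⁻¹‖ ≤ 1 := by simp [hy]
    have n4 : ‖(y j)⁻¹ * (y k)⁻¹‖ ≤ 1 := by simp [hy]
    have := he j k (y j) (y k) (hy0 j) (hy0 k) g1 g2 (one_sub_ne ht n1) (one_sub_ne ht n2)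
    rw [← this]
    have h1 : CP t (y⁻¹ j) (y⁻¹ k) * DP t (y⁻¹ j) (y⁻¹ k) = 1 := by
      simp only [Pi.inv_apply]
      unfold CP DP
      have := one_sub_ne ht n3
      have := one_sub_ne ht n4
      have : 1 - (y j)⁻¹ / (y k)⁻¹ ≠ 0 := by
        rw [inv_div_inv, sub_ne_zero, ne_comm, ne_eq, div_eq_one_iff_eq (hy0 j)]
        exact fun h => g1 h.symm
      have : 1 - (y j)⁻¹ * (y k)⁻¹ ≠ 0 := by
        rw [← mul_inv, sub_ne_zero, ne_comm, ne_eq, inv_eq_one]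
        exact g2
      rw [div_mul_div_comm, mul_comm, div_self]
      positivity
    simp only [decide_eq_true_eq]
    linear_combination (if s.symm j < s.symm k then
          CP t (if sg j then y j else (y j)⁻¹) (if sg k then y k else (y k)⁻¹) else
          CP t (if sg k then y k else (y k)⁻¹) (if sg j then y j else (y j)⁻¹)) *
          DP t (y j) (y k) * h1
  have hS : (∏ j, if 0 < lam j then pp a b c d (y⁻¹ j) / (1 - y⁻¹ j ^ 2) else 1) *
      (∏ j, y⁻¹ j ^ (-(lam j))) *
      ((∏ j, if 0 < mu j then pp a b c d (bb j) / (1 - bb j ^ 2) else 1) *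
      (∏ j, bb j ^ (-(mu j)))) * ((∏ j, (1 - y⁻¹ j ^ 2) / pp a b c d (y⁻¹ j)) *
      ∏ j, (1 - y j ^ 2) / pp a b c d (y j)) =
      ∏ j, (y j ^ (lam j - mu (s.symm j)) * N j (y j)) := by
    have hre : (∏ j, if 0 < mu j then pp a b c d (bb j) / (1 - bb j ^ 2) else 1) *
      (∏ j, bb j ^ (-(mu j))) = ∏ j, ((if 0 < mu (s.symm j) then
        pp a b c d (if sg j then y j else (y j)⁻¹) /
          (1 - (if sg j then y j else (y j)⁻¹) ^ 2) else 1) *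
        (if sg j then y j else (y j)⁻¹) ^ (-(mu (s.symm j)))) := by
      rw [← Finset.prod_mul_distrib, ← Equiv.prod_comp s (fun j => ((if 0 < mu (s.symm j) then
        pp a b c d (if sg j then y j else (y j)⁻¹) /
          (1 - (if sg j then y j else (y j)⁻¹) ^ 2) else 1) *
        (if sg j then y j else (y j)⁻¹) ^ (-(mu (s.symm j)))))]
      refine Finset.prod_congr rfl fun j _ => ?_
      rw [hbb j]
      simp only [Equiv.symm_apply_apply]
    rw [hre]
    simp only [← Finset.prod_mul_distrib]
    refine Finset.prod_congr rfl fun j _ => ?_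
    rw [← hN3 j (y j) (hy j) (hg.1 j)]
    unfold singleF
    simp only [Pi.inv_apply]
    ring
  unfold KK CZ DZ Mon
  rw [← hP, ← hS]
  ring

instance fact2pi : Fact (0 < 2 * Real.pi) := ⟨Real.two_pi_pos⟩

abbrev Tor := AddCircle (2 * Real.pi)

def tc (x : Tor) : ℂ := (AddCircle.toCircle x : ℂ)

lemma tc_cont : Continuous tc := continuous_subtype_val.comp AddCircle.continuous_toCircle
lemma tc_norm (x : Tor) : ‖tc x‖ = 1 := Circle.norm_coe _
lemma tc_add (x y : Tor) : tc (x + y) = tc x * tc y := by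
  unfold tc; rw [AddCircle.toCircle_add]; rfl
lemma tc_neg (x : Tor) : tc (-x) = (tc x)⁻¹ := by
  unfold tc; rw [AddCircle.toCircle_neg]; simp
lemma tc_mk (x : ℝ) : tc (x : Tor) = exp (I * x) := by
  unfold tc
  rw [AddCircle.toCircle_apply_mk, div_self Real.two_pi_pos.ne', one_mul, Circle.coe_exp, mul_comm]

lemma good_mean {e : ℤ} {G : ℂ → ℂ} (h : Good e G) (he : 1 ≤ e) :
    ∫ θ : Tor, G (tc θ) = 0 := by
  obtain ⟨H, h1, h2⟩ := h
  rw [← AddCircle.intervalIntegral_preimage _ 0, zero_add]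
  obtain ⟨k, hk⟩ : ∃ k : ℕ, e = k + 1 := ⟨(e - 1).toNat, by omega⟩
  have hd : DiffContOnCl ℂ (fun u => u ^ (k + 1) * H u) (Metric.ball 0 |(1 : ℝ)|) := by
    have : DifferentiableOn ℂ (fun u => u ^ (k + 1) * H u) (Metric.closedBall 0 1) :=
      DifferentiableOn.mul (by fun_prop) h1
    rw [abs_one]
    refine ⟨this.mono Metric.ball_subset_closedBall, ?_⟩
    rw [closure_ball _ one_ne_zero]
    exact this.continuousOn
  have := hd.circleAverage
  rw [Real.circleAverage_def] at this
  simp only [ne_eq, Nat.add_eq_zero_iff, one_ne_zero, and_false, not_false_eq_true, zero_pow,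
    zero_mul, smul_eq_zero, inv_eq_zero, mul_eq_zero, OfNat.ofNat_ne_zero, Real.pi_ne_zero,
    or_self, false_or] at this
  rw [← this]
  refine intervalIntegral.integral_congr fun θ _ => ?_
  have e1 : tc (θ : Tor) = circleMap 0 1 θ := by
    rw [tc_mk, circleMap]; simp [mul_comm]
  rw [h2 _ (tc_norm _), e1, hk]
  norm_cast

def yv {n : ℕ} (w : Equiv.Perm (Fin n) × (Fin n → Bool)) (x : Fin n → Tor) : Fin n → ℂ :=
  (actZ w (fun j => tc (x j)))⁻¹

lemma yv_apply {n : ℕ} (w : Equiv.Perm (Fin n) × (Fin n → Bool)) (x : Fin n → Tor) (j : Fin n) :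
    yv w x j = if w.2 j then tc (x (w.1 j)) else (tc (x (w.1 j)))⁻¹ := by
  simp only [yv, actZ, Pi.inv_apply]
  split_ifs <;> simp

lemma yv_norm {n : ℕ} (w : Equiv.Perm (Fin n) × (Fin n → Bool)) (x : Fin n → Tor) (j : Fin n) :
    ‖yv w x j‖ = 1 := by
  rw [yv_apply]; split_ifs <;> simp [tc_norm]

lemma yv_cont {n : ℕ} (w : Equiv.Perm (Fin n) × (Fin n → Bool)) (j : Fin n) :
    Continuous fun x => yv w x j := by
  simp only [yv_apply]
  split_ifs
  · exact tc_cont.comp (continuous_apply _)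
  · have hc : Continuous fun x : Fin n → Tor => tc (x (w.1 j)) :=
      tc_cont.comp (continuous_apply _)
    refine hc.inv₀ fun x h => ?_
    have := tc_norm (x (w.1 j))
    rw [h] at this
    simp at this

def shf {n : ℕ} (w : Equiv.Perm (Fin n) × (Fin n → Bool)) (i0 : Fin n) (θ : Tor) : Fin n → Tor :=
  fun i => if w.1.symm i ≤ i0 then (if w.2 (w.1.symm i) then θ else -θ) else 0

lemma yv_shf {n : ℕ} (w : Equiv.Perm (Fin n) × (Fin n → Bool)) (i0 : Fin n) (θ : Tor)
    (x : Fin n → Tor) :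
    yv w (x + shf w i0 θ) = fun j => yv w x j * if j ≤ i0 then tc θ else 1 := by
  funext j
  simp only [yv_apply, Pi.add_apply, tc_add, shf, Equiv.symm_apply_apply]
  have : tc 0 = 1 := by simp [tc]
  split_ifs <;> simp [tc_neg, mul_comm, this]

lemma shf_cont {n : ℕ} (w : Equiv.Perm (Fin n) × (Fin n → Bool)) (i0 : Fin n) :
    Continuous (shf w i0) := by
  refine continuous_pi fun i => ?_
  unfold shf
  split_ifs <;> fun_prop

lemma torus_zero {n : ℕ} {t : ℂ} (ht : ‖t‖ < 1) (e1 e2 : Fin n → Fin n → Bool) (q : Fin n → ℤ)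
    (N : Fin n → ℂ → ℂ) (i0 : Fin n)
    (hN1 : ∀ j, ContinuousOn (N j) (Metric.sphere 0 1))
    (hN : ∀ j ≤ i0, DifferentiableOn ℂ (N j) (Metric.closedBall 0 1))
    (hq : 1 ≤ ∑ j, if j ≤ i0 then q j else 0)
    (w : Equiv.Perm (Fin n) × (Fin n → Bool)) :
    ∫ x : Fin n → Tor, KK t e1 e2 q N (yv w x) = 0 := by
  set F : (Fin n → Tor) → ℂ := fun x => KK t e1 e2 q N (yv w x) with hF
  have hFc : Continuous F := KK_cont ht e1 e2 q N hN1 _ (yv_cont w) (yv_norm w)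
  have h1 : ∀ θ : Tor, ∫ x, F (x + shf w i0 θ) = ∫ x, F x := fun θ =>
    integral_add_right_eq_self F _
  have h2 : ∀ x, ∫ θ : Tor, F (x + shf w i0 θ) = 0 := by
    intro x
    have := good_mean (KK_good ht e1 e2 q N i0 hN (yv w x) (yv_norm w x)) hq
    simpa only [hF, yv_shf] using this
  have hint : Integrable (Function.uncurry fun (θ : Tor) (x : Fin n → Tor) => F (x + shf w i0 θ))
      (volume.prod volume) := by
    refine Continuous.integrable_of_hasCompactSupport ?_ (HasCompactSupport.of_compactSpace _)
    exact hFc.comp (continuous_snd.add ((shf_cont w i0).comp continuous_fst))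
  have h3 := integral_integral_swap hint
  simp only [h1, h2, integral_zero, integral_const, smul_eq_zero] at h3
  rcases h3 with h3 | h3
  · exfalso
    rw [Measure.real, AddCircle.measure_univ, ENNReal.toReal_ofReal Real.two_pi_pos.le] at h3
    exact Real.two_pi_pos.ne' h3
  · exact h3

lemma box_torus {n : ℕ} (F : (Fin n → Tor) → ℂ) (hF : Continuous F) :
    ∫ xi in (Set.univ.pi fun _ => Set.Icc 0 (2 * Real.pi) : Set (Fin n → ℝ)),
      F (fun j => (xi j : Tor)) = ∫ x, F x := by
  have hmp : MeasurePreserving (fun (xi : Fin n → ℝ) (j : Fin n) => (xi j : Tor))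
      (Measure.pi fun _ => (volume : Measure ℝ).restrict (Set.Ioc 0 (0 + 2 * Real.pi)))
      (Measure.pi fun _ => (volume : Measure Tor)) :=
    measurePreserving_pi _ _ fun _ => AddCircle.measurePreserving_mk (2 * Real.pi) 0
  have h1 : (volume : Measure (Fin n → ℝ)).restrict
      (Set.univ.pi fun _ => Set.Icc 0 (2 * Real.pi)) =
      Measure.pi fun _ => (volume : Measure ℝ).restrict (Set.Ioc 0 (0 + 2 * Real.pi)) := by
    rw [volume_pi, Measure.restrict_pi_pi]
    congr 1
    funext _
    rw [zero_add]
    exact Measure.restrict_congr_set Ioc_ae_eq_Icc.symm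
  rw [h1]
  have := hmp.map_eq
  rw [volume_pi, ← this, integral_map hmp.measurable.aemeasurable hF.aestronglyMeasurable]

lemma ae_lin {n : ℕ} (L : (Fin n → ℝ) →ₗ[ℝ] ℝ) (hL : L ≠ 0) :
    ∀ᵐ xi : Fin n → ℝ, exp (I * (L xi : ℂ)) ≠ 1 := by
  have hs : Function.Surjective L := LinearMap.surjective hL
  have hset : MeasurableSet {r : ℝ | exp (I * (r : ℂ)) ≠ 1} := by
    refine IsOpen.measurableSet ?_
    exact isOpen_ne_fun (by fun_prop) (by fun_prop)
  refine (ae_comp_linearMap_mem_iff L volume volume hs hset).2 ?_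
  have hc : (Set.range fun k : ℤ => (k : ℝ) * (2 * Real.pi)).Countable := Set.countable_range _
  filter_upwards [hc.ae_notMem volume] with r hr h
  apply hr
  rw [Complex.exp_eq_one_iff] at h
  obtain ⟨k, hk⟩ := h
  refine ⟨k, ?_⟩
  have : (r : ℂ) = k * (2 * Real.pi) := by
    apply mul_left_cancel₀ I_ne_zero
    rw [hk]; ring
  exact_mod_cast this.symm

lemma ae_gen {n : ℕ} : ∀ᵐ xi : Fin n → ℝ, GenZ (fun j => tc (xi j : Tor)) := by
  have A : ∀ j : Fin n, ∀ᵐ xi : Fin n → ℝ, exp (I * xi j) ^ 2 ≠ 1 := by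
    intro j
    have := ae_lin ((2 : ℝ) • LinearMap.proj (R := ℝ) (φ := fun _ : Fin n => ℝ) j) (by
      intro h
      have := LinearMap.congr_fun h (Pi.single j 1)
      simp at this)
    filter_upwards [this] with xi h
    rw [← Complex.exp_nat_mul]
    convert h using 2
    simp; ring
  have B : ∀ j k : Fin n, j ≠ k → ∀ᵐ xi : Fin n → ℝ,
      exp (I * xi j) ≠ exp (I * xi k) ∧ exp (I * xi j) * exp (I * xi k) ≠ 1 := by
    intro j k hjk
    have h1 := ae_lin (LinearMap.proj (R := ℝ) (φ := fun _ : Fin n => ℝ) j -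
      LinearMap.proj (R := ℝ) (φ := fun _ : Fin n => ℝ) k) (by
      intro h
      have := LinearMap.congr_fun h (Pi.single j 1)
      simp [hjk.symm] at this)
    have h2 := ae_lin (LinearMap.proj (R := ℝ) (φ := fun _ : Fin n => ℝ) j +
      LinearMap.proj (R := ℝ) (φ := fun _ : Fin n => ℝ) k) (by
      intro h
      have := LinearMap.congr_fun h (Pi.single j 1)
      simp [hjk.symm] at this)
    filter_upwards [h1, h2] with xi h1 h2
    constructor
    · intro h
      apply h1
      simp only [LinearMap.sub_apply, LinearMap.proj_apply, ofReal_sub]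
      rw [mul_sub, exp_sub, h, div_self (exp_ne_zero _)]
    · rw [← exp_add]
      simpa [mul_add] using h2
  simp only [GenZ, tc_mk]
  refine Filter.Eventually.and (ae_all_iff.2 A) ?_
  rw [ae_all_iff]; intro j
  rw [ae_all_iff]; intro k
  by_cases h : j = k
  · simp [h]
  · filter_upwards [B j k h] with xi hx _ using hx

lemma gen_act {n : ℕ} (w : Equiv.Perm (Fin n) × (Fin n → Bool)) (z : Fin n → ℂ) (hz : ∀ j, z j ≠ 0)
    (h : GenZ z) : GenZ (actZ w z)⁻¹ := by
  constructor
  · intro j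
    have := h.1 (w.1 j)
    simp only [actZ, Pi.inv_apply]
    split_ifs <;> simpa using this
  · intro j k hjk
    have hne : w.1 j ≠ w.1 k := fun hh => hjk (w.1.injective hh)
    obtain ⟨g1, g2⟩ := h.2 _ _ hne
    have a1 := hz (w.1 j)
    have a2 := hz (w.1 k)
    simp only [actZ, Pi.inv_apply]
    split_ifs
    · simpa using ⟨g1, g2⟩
    · simp only [inv_inv]
      refine ⟨fun hh => g2 ?_, fun hh => g1 ?_⟩
      · rw [hh]; field_simp
      · field_simp at hh; exact hh
    · simp only [inv_inv]
      refine ⟨fun hh => g2 ?_, fun hh => g1 ?_⟩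
      · rw [← hh]; field_simp
      · field_simp at hh; exact hh.symm
    · refine ⟨fun hh => g1 (inv_injective hh), fun hh => g2 ?_⟩
      rwa [← mul_inv, inv_eq_one] at hh

lemma sum_pos_of {n : ℕ} (lam mu : Fin n → ℤ) (hmu : ∀ i j : Fin n, i ≤ j → mu j ≤ mu i)
    (i0 : Fin n) (heq : ∀ j < i0, lam j = mu j) (hlt : mu i0 < lam i0) (s : Equiv.Perm (Fin n)) :
    1 ≤ ∑ j, if j ≤ i0 then lam j - mu (s j) else 0 := by
  have h1 : ∑ j, (if j ≤ i0 then (1 : ℤ) else 0) * mu (s j) ≤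
      ∑ j, (if j ≤ i0 then (1 : ℤ) else 0) * mu j := by
    refine Monovary.sum_mul_comp_perm_le_sum_mul ?_
    intro i j hij
    have : j < i := by
      by_contra hh
      exact absurd (hmu i j (not_lt.1 hh)) (not_le.2 hij)
    dsimp only
    split_ifs with h1 h2
    · exact le_rfl
    · exact absurd (this.le.trans h1) h2
    · simp
    · exact le_rfl
  have h2 : ∑ j, (if j ≤ i0 then (1 : ℤ) else 0) * mu j < ∑ j, if j ≤ i0 then lam j else 0 := by
    refine Finset.sum_lt_sum (fun j _ => ?_) ⟨i0, mem_univ _, by simpa using hlt⟩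
    split_ifs with h
    · rcases h.lt_or_eq with h | h
      · rw [heq j h]; simp
      · subst h; simpa using hlt.le
    · simp
  have h3 : ∑ j, (if j ≤ i0 then lam j - mu (s j) else 0) =
      (∑ j, if j ≤ i0 then lam j else 0) - ∑ j, (if j ≤ i0 then (1 : ℤ) else 0) * mu (s j) := by
    rw [← Finset.sum_sub_distrib]
    refine Finset.sum_congr rfl fun j _ => ?_
    split_ifs <;> simp
  rw [h3]; omega



lemma Cf_eq {n : ℕ} (t a b c d : ℂ) (lam : Fin n → ℤ) (xi : Fin n → ℂ) :
    Cf n t a b c d lam xi = CZ t a b c d lam (fun j => exp (I * xi j)) := by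
  unfold Cf CZ prodLt CP pp
  simp only [mul_sub, mul_add, exp_sub, exp_add, ← Complex.exp_nat_mul]
  congr 1
  refine Finset.prod_congr rfl fun j _ => ?_
  rw [show (2 : ℂ) * I * xi j = ((2 : ℕ) : ℂ) * (I * xi j) by push_cast; ring]

lemma Dlt_eq {n : ℕ} (t a b c d : ℂ) (xi : Fin n → ℂ) :
    Dlt n t a b c d xi = DZ t a b c d (fun j => exp (I * xi j)) := by
  unfold Dlt DZ prodLt DP pp
  simp only [mul_sub, mul_add, exp_sub, exp_add, ← Complex.exp_nat_mul]
  congr 1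
  refine Finset.prod_congr rfl fun j _ => ?_
  rw [show (2 : ℂ) * I * xi j = ((2 : ℕ) : ℂ) * (I * xi j) by push_cast; ring]

lemma Mon_eq {n : ℕ} (lam : Fin n → ℤ) (xi : Fin n → ℂ) :
    exp (-I * ∑ j : Fin n, (lam j : ℂ) * xi j) = Mon lam (fun j => exp (I * xi j)) := by
  unfold Mon
  rw [Finset.mul_sum, Complex.exp_sum]
  refine Finset.prod_congr rfl fun j _ => ?_
  rw [← Complex.exp_int_mul]
  congr 1
  push_cast; ring

lemma act_eq {n : ℕ} (w : Equiv.Perm (Fin n) × (Fin n → Bool)) (xi : Fin n → ℂ) :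
    (fun j => exp (I * act n w xi j)) = actZ w (fun j => exp (I * xi j)) := by
  funext j
  unfold act actZ
  split_ifs
  · rw [← Complex.exp_neg]; congr 1; ring
  · rw [one_mul]

def SZ {n : ℕ} (t a b c d : ℂ) (lam : Fin n → ℤ) (z : Fin n → ℂ) : ℂ :=
  ∑ w : Equiv.Perm (Fin n) × (Fin n → Bool),
    CZ t a b c d lam (actZ w z) * Mon lam (actZ w z)

lemma P_eq {n : ℕ} (t a b c d : ℂ) (lam : Fin n → ℤ) (xi : Fin n → ℂ) :
    P n t a b c d lam xi = ccf n t a b c d lam * SZ t a b c d lam (fun j => exp (I * xi j)) := by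
  unfold P SZ
  congr 1
  refine Finset.sum_congr rfl fun w _ => ?_
  rw [Cf_eq, Mon_eq, act_eq]

lemma conj_CZ {n : ℕ} (t a b c d : ℝ) (lam : Fin n → ℤ) (z : Fin n → ℂ) :
    (starRingEnd ℂ) (CZ (t : ℂ) a b c d lam z) = CZ (t : ℂ) a b c d lam (fun j => (starRingEnd ℂ) (z j)) := by
  unfold CZ prodLt CP pp
  simp only [map_mul, map_prod, apply_ite (starRingEnd ℂ), map_div₀, map_sub, map_one, map_pow,
    conj_ofReal]

lemma conj_DZ {n : ℕ} (t a b c d : ℝ) (z : Fin n → ℂ) :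
    (starRingEnd ℂ) (DZ (t : ℂ) a b c d z) = DZ (t : ℂ) a b c d (fun j => (starRingEnd ℂ) (z j)) := by
  unfold DZ prodLt DP pp
  simp only [map_mul, map_prod, apply_ite (starRingEnd ℂ), map_div₀, map_sub, map_one, map_pow,
    conj_ofReal]

lemma conj_Mon {n : ℕ} (lam : Fin n → ℤ) (z : Fin n → ℂ) :
    (starRingEnd ℂ) (Mon lam z) = Mon lam (fun j => (starRingEnd ℂ) (z j)) := by
  unfold Mon
  simp only [map_prod, map_zpow₀]

lemma conj_unit {z : ℂ} (h : ‖z‖ = 1) : (starRingEnd ℂ) z = z⁻¹ :=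
  (Complex.inv_eq_conj h).symm

lemma conj_act {n : ℕ} (w : Equiv.Perm (Fin n) × (Fin n → Bool)) (z : Fin n → ℂ)
    (hz : ∀ j, ‖z j‖ = 1) : (fun j => (starRingEnd ℂ) (actZ w z j)) = actZ w z⁻¹ := by
  funext j
  unfold actZ
  split_ifs
  · rw [map_inv₀, conj_unit (hz _)]; rfl
  · rw [conj_unit (hz _)]; rfl

lemma conj_SZ {n : ℕ} (t a b c d : ℝ) (lam : Fin n → ℤ) (z : Fin n → ℂ) (hz : ∀ j, ‖z j‖ = 1) :
    (starRingEnd ℂ) (SZ (t : ℂ) a b c d lam z) = SZ (t : ℂ) a b c d lam z⁻¹ := by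
  unfold SZ
  simp only [map_sum, map_mul, conj_CZ, conj_Mon]
  refine Finset.sum_congr rfl fun w _ => ?_
  rw [conj_act w z hz]

lemma norm_DZ {n : ℕ} (t a b c d : ℝ) (z : Fin n → ℂ) (hz : ∀ j, ‖z j‖ = 1) :
    ((‖DZ (t : ℂ) a b c d z‖ : ℂ)) ^ 2 = DZ (t : ℂ) a b c d z * DZ (t : ℂ) a b c d z⁻¹ := by
  rw [← Complex.mul_conj', conj_DZ]
  congr 2
  funext j
  rw [conj_unit (hz j)]; rfl

lemma orth_aux (n : ℕ) (t t0 t1 t2 t3 : ℝ)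
    (ht : t ∈ Set.Ioo (-1 : ℝ) 1)
    (h0 : t0 ∈ Set.Ioo (-1 : ℝ) 1)
    (h1 : t1 ∈ Set.Ioo (-1 : ℝ) 1)
    (h2 : t2 ∈ Set.Ioo (-1 : ℝ) 1)
    (h3 : t3 ∈ Set.Ioo (-1 : ℝ) 1)
    (lam mu : Fin n → ℤ) (hlam : IsPart n lam) (hmu : IsPart n mu) (i0 : Fin n)
    (heq : ∀ j < i0, lam j = mu j) (hlt : mu i0 < lam i0) :
    ∫ xi in box n,
        P n (t : ℂ) (t0 : ℂ) (t1 : ℂ) (t2 : ℂ) (t3 : ℂ) lam (fun j => (xi j : ℂ)) *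
        (starRingEnd ℂ) (P n (t : ℂ) (t0 : ℂ) (t1 : ℂ) (t2 : ℂ) (t3 : ℂ) mu (fun j => (xi j : ℂ))) *
        ((‖Dlt n (t : ℂ) (t0 : ℂ) (t1 : ℂ) (t2 : ℂ) (t3 : ℂ)
          (fun j => (xi j : ℂ))‖ : ℂ)) ^ 2 = 0 := by
  have nrm : ∀ r : ℝ, r ∈ Set.Ioo (-1 : ℝ) 1 → ‖(r : ℂ)‖ < 1 := by
    intro r hr
    rw [Complex.norm_real, Real.norm_eq_abs, abs_lt]
    exact hr
  have htn := nrm t ht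
  choose e1 e2 N hN1 hN2 hN3 using
    fun w w' : Equiv.Perm (Fin n) × (Fin n → Bool) =>
      term_ex (t : ℂ) t0 t1 t2 t3 htn (nrm _ h0) (nrm _ h1) (nrm _ h2) (nrm _ h3) lam mu
        hlam.2 hmu.2 (w'.1.trans w.1.symm)
        (fun i => w'.2 ((w'.1.trans w.1.symm).symm i) == w.2 i)
  set T : (Equiv.Perm (Fin n) × (Fin n → Bool)) → (Equiv.Perm (Fin n) × (Fin n → Bool)) →
      (Fin n → Tor) → ℂ := fun w w' x =>
    KK (t : ℂ) (e1 w w') (e2 w w') (fun j => lam j - mu ((w'.1.trans w.1.symm).symm j))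
      (N w w') (yv w x) with hT
  have hTc : ∀ w w', Continuous (T w w') := fun w w' =>
    KK_cont htn _ _ _ _ (hN1 w w') _ (yv_cont w) (yv_norm w)
  have hT0 : ∀ w w', ∫ x, T w w' x = 0 := fun w w' =>
    torus_zero htn _ _ _ _ i0 (hN1 w w')
      (fun j hj => hN2 w w' j (lt_of_lt_of_le (lt_of_le_of_lt (hmu.2 i0) hlt) (hlam.1 j i0 hj)))
      (sum_pos_of lam mu hmu.1 i0 heq hlt _) w
  set K : ℂ := ccf n (t : ℂ) t0 t1 t2 t3 lam * (starRingEnd ℂ) (ccf n (t : ℂ) t0 t1 t2 t3 mu)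
  set F : (Fin n → Tor) → ℂ := fun x => K * ∑ w, ∑ w', T w w' x with hF
  have hFc : Continuous F :=
    continuous_const.mul (continuous_finsetSum _ fun w _ => continuous_finsetSum _ fun w' _ => hTc w w')
  have key : ∫ xi in box n, F (fun j => (xi j : Tor)) = 0 := by
    unfold box
    rw [box_torus F hFc, hF, integral_const_mul]
    have hi : ∀ w w', Integrable (T w w') := fun w w' =>
      (hTc w w').integrable_of_hasCompactSupport (HasCompactSupport.of_compactSpace _)
    rw [integral_finsetSum _ fun w _ => integrable_finsetSum _ fun w' _ => hi w w']
    rw [Finset.sum_eq_zero, mul_zero]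
    intro w _
    rw [integral_finsetSum _ fun w' _ => hi w w']
    exact Finset.sum_eq_zero fun w' _ => hT0 w w'
  rw [← key]
  refine integral_congr_ae (ae_restrict_of_ae ?_)
  filter_upwards [ae_gen (n := n)] with xi hg
  set z : Fin n → ℂ := fun j => tc (xi j : Tor) with hz
  have hzn : ∀ j, ‖z j‖ = 1 := fun j => tc_norm _
  have hz0 : ∀ j, z j ≠ 0 := fun j h => by simpa [h] using hzn j
  have hze : (fun j => exp (I * ((xi j : ℝ) : ℂ))) = z := by
    funext j; rw [hz]; exact (tc_mk _).symm
  rw [P_eq, P_eq, Dlt_eq, map_mul]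
  simp only [hze]
  rw [conj_SZ _ _ _ _ _ _ _ hzn, norm_DZ _ _ _ _ _ _ hzn]
  simp only [hF]
  have hterm : ∀ w w', CZ (t : ℂ) t0 t1 t2 t3 lam (actZ w z) * Mon lam (actZ w z) *
      (CZ (t : ℂ) t0 t1 t2 t3 mu (actZ w' z⁻¹) * Mon mu (actZ w' z⁻¹)) *
      (DZ (t : ℂ) t0 t1 t2 t3 z * DZ (t : ℂ) t0 t1 t2 t3 z⁻¹) =
      T w w' (fun j => (xi j : Tor)) := by
    intro w w'
    have := hN3 w w' (yv w fun j => (xi j : Tor)) (yv_norm w _) (gen_act w z hz0 hg)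
      (actZ w' z⁻¹) (by
        intro j
        rw [Equiv.symm_apply_apply]
        simp only [yv_apply, actZ, Equiv.trans_apply,
          Equiv.apply_symm_apply, Pi.inv_apply, inv_inv, hz]
        cases w'.2 j <;> cases w.2 (w.1.symm (w'.1 j)) <;> simp)
    have hy : (yv w fun j => (xi j : Tor))⁻¹ = actZ w z := by
      unfold yv; rw [inv_inv]
    rw [hT]
    simp only
    rw [← this, hy, ← DZ_inv _ _ _ _ _ w z]
    rfl
  simp only [← hterm]
  unfold SZ
  simp only [K]
  simp only [← Finset.sum_mul, ← Finset.mul_sum]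
  ring

/-- orthogonality of the hyperoctahedral Hall-Littlewood functions. -/
theorem orthogonality (n : ℕ) (hn : 1 ≤ n) (t t0 t1 t2 t3 : ℝ)
    (ht : t ∈ Set.Ioo (-1 : ℝ) 1) (htz : t ≠ 0)
    (h0 : t0 ∈ Set.Ioo (-1 : ℝ) 1) (h0z : t0 ≠ 0)
    (h1 : t1 ∈ Set.Ioo (-1 : ℝ) 1) (h1z : t1 ≠ 0)
    (h2 : t2 ∈ Set.Ioo (-1 : ℝ) 1) (h2z : t2 ≠ 0)
    (h3 : t3 ∈ Set.Ioo (-1 : ℝ) 1) (h3z : t3 ≠ 0)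
    (lam mu : Fin n → ℤ) (hlam : IsPart n lam) (hmu : IsPart n mu) (hne : lam ≠ mu) :
    ∫ xi in box n,
        P n (t : ℂ) (t0 : ℂ) (t1 : ℂ) (t2 : ℂ) (t3 : ℂ) lam (fun j => (xi j : ℂ)) *
        (starRingEnd ℂ) (P n (t : ℂ) (t0 : ℂ) (t1 : ℂ) (t2 : ℂ) (t3 : ℂ) mu (fun j => (xi j : ℂ))) *
        ((‖Dlt n (t : ℂ) (t0 : ℂ) (t1 : ℂ) (t2 : ℂ) (t3 : ℂ)
          (fun j => (xi j : ℂ))‖ : ℂ)) ^ 2 = 0 := by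
  obtain ⟨i0, hi0, hmin⟩ : ∃ i0, lam i0 ≠ mu i0 ∧ ∀ j < i0, lam j = mu j := by
    obtain ⟨i, hi⟩ := Function.ne_iff.1 hne
    have hw := (wellFounded_lt (α := Fin n))
    refine ⟨hw.min {i | lam i ≠ mu i} ⟨i, hi⟩, hw.min_mem {i | lam i ≠ mu i} ⟨i, hi⟩, ?_⟩
    intro j hj
    by_contra hh
    exact hw.not_lt_min {i | lam i ≠ mu i} hh hj
  rcases lt_or_gt_of_ne hi0 with h | h
  · have := orth_aux n t t0 t1 t2 t3 ht h0 h1 h2 h3 mu lam hmu hlam i0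
      (fun j hj => (hmin j hj).symm) h
    have h5 := congrArg (starRingEnd ℂ) this
    rw [← integral_conj, map_zero] at h5
    rw [← h5]
    refine integral_congr_ae (Filter.Eventually.of_forall fun xi => ?_)
    simp only [map_mul, map_pow, conj_conj, conj_ofReal]
    ring
  · exact orth_aux n t t0 t1 t2 t3 ht h0 h1 h2 h3 lam mu hlam hmu i0 hmin h

end QB

end
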